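/- Let V be an n-element set, let X ⊆ V with |X| = ⌈2n/3⌉, and let H be the 3-graph on V whose edges are all 3-element subsets e of V with |e ∩ X| ≠ 2. Then H contains no tight Hamiltonian cycle, and for every ε > 0 there exists n_0 such that for all n ≥ n_0, δ(H) ≥ (5/9 − ε)·C(n−1,2). -/

import Mathlib

open Finset

/-- A tight Hamiltonian cycle in a 3-graph `H` on a finite vertex set `V`:
a cyclic ordering of all vertices in which every three cyclically
consecutive vertices form an edge of `H`. -/
def HasTightHamCycle {V : Type} [DecidableEq V] [Fintype V] (H : Finset (Finset V)) : Prop :=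
  ∃ f : ZMod (Fintype.card V) → V, Function.Bijective f ∧
    ∀ i, ({f i, f (i + 1), f (i + 2)} : Finset V) ∈ H

/-- The 3-graph on `V` whose edges are all 3-element subsets `e` with `|e ∩ X| ≠ 2`. -/
def compX (V : Type) [DecidableEq V] [Fintype V] (X : Finset V) : Finset (Finset V) :=
  ((Finset.univ : Finset V).powersetCard 3).filter fun e => (e ∩ X).card ≠ 2

lemma card_inter_three {V : Type} [DecidableEq V] (X : Finset V) (a b c : V)
    (h : ({a, b, c} : Finset V).card = 3) :
    (({a, b, c} : Finset V) ∩ X).card =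
      (if a ∈ X then 1 else 0) + (if b ∈ X then 1 else 0) + (if c ∈ X then 1 else 0) := by
  have hab : a ≠ b := by
    rintro rfl
    have := Finset.card_le_two (a := a) (b := c)
    simp at h
    omega
  have hac : a ≠ c := by
    rintro rfl
    have := Finset.card_le_two (a := b) (b := a)
    rw [Finset.insert_eq_of_mem (by simp)] at h
    omega
  have hbc : b ≠ c := by
    rintro rfl
    have := Finset.card_le_two (a := a) (b := b)
    simp at h
    omega
  rw [← Finset.filter_mem_eq_inter, Finset.card_filter, Finset.sum_insert (by simp [hab, hac]),
    Finset.sum_insert (by simp [hbc]), Finset.sum_singleton]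
  ring

lemma ceil_bounds (n x : ℕ) (h : (x : ℤ) = ⌈2 * (n : ℚ) / 3⌉) :
    2 * n ≤ 3 * x ∧ 3 * x ≤ 2 * n + 2 := by
  have h' := h.symm
  rw [Int.ceil_eq_iff] at h'
  obtain ⟨h1, h2⟩ := h'
  push_cast at h1 h2
  constructor
  · have : (2 * n : ℚ) ≤ 3 * x := by linarith
    exact_mod_cast this
  · have : (3 * x : ℚ) < 2 * n + 3 := by linarith
    have : 3 * x < 2 * n + 3 := by exact_mod_cast this
    omega

lemma noHam (V : Type) [DecidableEq V] [Fintype V] (X : Finset V)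
    (hX : (X.card : ℤ) = ⌈2 * (Fintype.card V : ℚ) / 3⌉) :
    ¬ HasTightHamCycle (compX V X) := by
  obtain ⟨h1, h2⟩ := ceil_bounds _ _ hX
  rintro ⟨f, hf, hE⟩
  have hc : ∀ i, ({f i, f (i + 1), f (i + 2)} : Finset V).card = 3 := fun i => by
    have := hE i
    simp only [compX, mem_filter, mem_powersetCard] at this
    exact this.1.2
  have hn3 : 3 ≤ Fintype.card V := by
    rw [← hc 0]; exact Finset.card_le_univ _
  have : NeZero (Fintype.card V) := ⟨by omega⟩
  set g : ZMod (Fintype.card V) → ℕ := fun i => if f i ∈ X then 1 else 0 with hg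
  have hg1 : ∀ i, g i ≤ 1 := fun i => by simp only [hg]; split_ifs <;> omega
  have h3 : ∀ i, g i + g (i + 1) + g (i + 2) ≠ 2 := fun i => by
    have := hE i
    simp only [compX, mem_filter, mem_powersetCard] at this
    rw [card_inter_three X _ _ _ (hc i)] at this
    exact this.2
  have hsum : ∑ i, g i = X.card := by
    rw [Function.Bijective.sum_comp hf (fun v => if v ∈ X then 1 else 0)]
    simp
  by_cases hex : ∃ i, g i + g (i + 1) + g (i + 2) = 3
  · obtain ⟨i, hi⟩ := hex
    have hk : ∀ k : ℕ, g (i + k) + g (i + k + 1) + g (i + k + 2) = 3 := by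
      intro k
      induction k with
      | zero => simpa using hi
      | succ k ih =>
        have e0 : i + ((k + 1 : ℕ) : ZMod (Fintype.card V)) = i + k + 1 := by push_cast; ring
        have e1 : i + (k : ZMod (Fintype.card V)) + 1 + 1 = i + k + 2 := by ring
        have a1 := h3 (i + k + 1)
        rw [e0]
        rw [e1] at *
        have := hg1 (i + k)
        have := hg1 (i + k + 1)
        have := hg1 (i + k + 2)
        have := hg1 (i + k + 1 + 2)
        omega
    have hall : ∀ j, g j = 1 := fun j => by
      have := hk (j - i).val
      rw [ZMod.natCast_zmod_val, add_sub_cancel] at this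
      have := hg1 j
      have := hg1 (j + 1)
      have := hg1 (j + 2)
      omega
    have : ∑ i, g i = Fintype.card V := by
      simp [hall, ZMod.card]
    omega
  · push Not at hex
    have hle : ∀ i, g i + g (i + 1) + g (i + 2) ≤ 1 := fun i => by
      have := hg1 i
      have := hg1 (i + 1)
      have := hg1 (i + 2)
      have := hex i
      have := h3 i
      omega
    have hs := Finset.sum_le_sum (fun i (_ : i ∈ Finset.univ) => hle i)
    rw [Finset.sum_add_distrib, Finset.sum_add_distrib] at hs
    have s1 : ∑ i, g (i + 1) = ∑ i, g i := Equiv.sum_comp (Equiv.addRight 1) g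
    have s2 : ∑ i, g (i + 2) = ∑ i, g i := Equiv.sum_comp (Equiv.addRight 2) g
    rw [s1, s2, hsum] at hs
    simp [ZMod.card] at hs
    omega

lemma deg_ge (V : Type) [DecidableEq V] [Fintype V] (X : Finset V) (v : V)
    (S : Finset (Finset V))
    (hS : ∀ p ∈ S, p.card = 2 ∧ v ∉ p ∧ ((insert v p) ∩ X).card ≠ 2) :
    S.card ≤ ((compX V X).filter fun e => v ∈ e).card := by
  apply Finset.card_le_card_of_injOn (fun p => insert v p)
  · intro p hp
    obtain ⟨a, b, c⟩ := hS p hp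
    simp [compX, mem_powersetCard, Finset.card_insert_of_notMem b, a, c]
  · intro p hp q hq h
    have h' : insert v p = insert v q := h
    rw [← Finset.erase_insert (hS p hp).2.1, h', Finset.erase_insert (hS q hq).2.1]

lemma deg_in (V : Type) [DecidableEq V] [Fintype V] (X : Finset V) (v : V) (hv : v ∈ X) :
    (X.card - 1).choose 2 + (Fintype.card V - X.card).choose 2 ≤
      ((compX V X).filter fun e => v ∈ e).card := by
  have hd : Disjoint ((X.erase v).powersetCard 2) (Xᶜ.powersetCard 2) := by
    rw [Finset.disjoint_left]
    intro p hp hq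
    rw [mem_powersetCard] at hp hq
    obtain ⟨a, ha⟩ : p.Nonempty := Finset.card_pos.mp (by omega)
    exact (Finset.mem_compl.mp (hq.1 ha)) (Finset.mem_of_mem_erase (hp.1 ha))
  have := deg_ge V X v ((X.erase v).powersetCard 2 ∪ Xᶜ.powersetCard 2) ?_
  · rwa [Finset.card_union_of_disjoint hd, card_powersetCard, card_powersetCard,
      Finset.card_erase_of_mem hv, Finset.card_compl] at this
  · intro p hp
    rw [mem_union, mem_powersetCard, mem_powersetCard] at hp
    rcases hp with ⟨h, h2⟩ | ⟨h, h2⟩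
    · have hvp : v ∉ p := fun h' => by simpa using h h'
      refine ⟨h2, hvp, ?_⟩
      rw [Finset.inter_eq_left.mpr, Finset.card_insert_of_notMem hvp]
      · omega
      · exact Finset.insert_subset hv (h.trans (Finset.erase_subset _ _))
    · have hvp : v ∉ p := fun h' => by simpa [hv] using h h'
      refine ⟨h2, hvp, ?_⟩
      rw [Finset.insert_inter_of_mem hv, Finset.disjoint_iff_inter_eq_empty.mp]
      · simp
      · rw [Finset.disjoint_left]
        intro a ha
        exact Finset.mem_compl.mp (h ha)

lemma deg_out (V : Type) [DecidableEq V] [Fintype V] (X : Finset V) (v : V) (hv : v ∉ X) :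
    (Fintype.card V - 1).choose 2 ≤
      ((compX V X).filter fun e => v ∈ e).card + X.card.choose 2 := by
  have := deg_ge V X v ((univ.erase v).powersetCard 2 \ X.powersetCard 2) ?_
  · have h2 := Finset.le_card_sdiff (X.powersetCard 2) ((univ.erase v).powersetCard 2)
    rw [card_powersetCard, card_powersetCard, Finset.card_erase_of_mem (mem_univ v),
      Finset.card_univ] at h2
    omega
  · intro p hp
    rw [mem_sdiff, mem_powersetCard, mem_powersetCard] at hp
    obtain ⟨⟨h, h2⟩, h3⟩ := hp
    have hvp : v ∉ p := fun h' => by simpa using h h'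
    refine ⟨h2, hvp, ?_⟩
    rw [Finset.insert_inter_of_notMem hv]
    intro h4
    apply h3
    refine ⟨?_, h2⟩
    have : p ∩ X = p := Finset.eq_of_subset_of_card_le Finset.inter_subset_left (by omega)
    exact Finset.inter_eq_left.mp this

theorem stmt_2 :
    (∀ (V : Type) [DecidableEq V] [Fintype V], ∀ X : Finset V,
        (X.card : ℤ) = ⌈2 * (Fintype.card V : ℚ) / 3⌉ →
        ¬ HasTightHamCycle (compX V X)) ∧
    (∀ ε : ℝ, 0 < ε → ∃ n₀ : ℕ, ∀ n : ℕ, n₀ ≤ n →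
      ∀ (V : Type) [DecidableEq V] [Fintype V], ∀ X : Finset V,
        Fintype.card V = n →
        (X.card : ℤ) = ⌈2 * (n : ℚ) / 3⌉ →
        ∀ v : V, (5 / 9 - ε) * ((n - 1).choose 2 : ℝ) ≤
          (((compX V X).filter fun e => v ∈ e).card : ℝ)) := by
  refine ⟨fun V _ _ X hX => noHam V X hX, ?_⟩
  intro ε hε
  refine ⟨10 + ⌈10 / ε⌉₊, ?_⟩
  intro n hn V _ _ X hV hX v
  obtain ⟨h1, h2⟩ := ceil_bounds _ _ hX
  have hn10 : 10 ≤ n := by omega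
  have hnε : 10 ≤ ε * n := by
    have a : 10 / ε ≤ n := (Nat.le_ceil _).trans (by exact_mod_cast (by omega : ⌈10 / ε⌉₊ ≤ n))
    rw [div_le_iff₀ hε] at a
    linarith
  have r10 : (10 : ℝ) ≤ n := by exact_mod_cast hn10
  have r1 : (2 * n : ℝ) ≤ 3 * X.card := by exact_mod_cast h1
  have r2 : (3 * X.card : ℝ) ≤ 2 * n + 2 := by exact_mod_cast h2
  have key : 2 * (n : ℝ) ≤ ε * ((n - 1) * (n - 2)) := by
    have : (n : ℝ) * n / 2 ≤ (n - 1) * (n - 2) := by nlinarith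
    have := mul_le_mul_of_nonneg_left this hε.le
    nlinarith
  by_cases hv : v ∈ X
  · have hd := deg_in V X v hv
    rw [hV] at hd
    have hd' : (((X.card - 1).choose 2 : ℕ) : ℝ) + ((n - X.card).choose 2 : ℕ) ≤
      (((compX V X).filter fun e => v ∈ e).card : ℝ) := by exact_mod_cast hd
    refine le_trans ?_ hd'
    rw [Nat.cast_choose_two, Nat.cast_choose_two, Nat.cast_choose_two,
      Nat.cast_sub (by omega : 1 ≤ n), Nat.cast_sub (by omega : 1 ≤ X.card),
      Nat.cast_sub (by omega : X.card ≤ n)]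
    push_cast
    nlinarith [mul_nonneg (sub_nonneg.2 r1) (sub_nonneg.2 r1),
      mul_nonneg (sub_nonneg.2 r1) (by linarith : (0 : ℝ) ≤ n - 10)]
  · have hd := deg_out V X v hv
    rw [hV] at hd
    have hd' : (((n - 1).choose 2 : ℕ) : ℝ) ≤
      (((compX V X).filter fun e => v ∈ e).card : ℝ) + (X.card.choose 2 : ℕ) := by
      exact_mod_cast hd
    rw [Nat.cast_choose_two, Nat.cast_choose_two, Nat.cast_sub (by omega : 1 ≤ n)] at hd'
    rw [Nat.cast_choose_two, Nat.cast_sub (by omega : 1 ≤ n)]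
    push_cast at *
    have : (X.card : ℝ) * (X.card - 1) ≤ (2 * n + 2) / 3 * ((2 * n - 1) / 3) := by
      apply mul_le_mul <;> linarith
    nlinarith
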